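/- arXiv:2603.17836 — 6 statements merged into one kernel-verified Lean document; each statement's English description precedes it below -/
import Mathlib

section
/- Let E be a real inner product space and let e_x : ℝ → E be differentiable on [0,T] with T ≥ 0, and let e_y, e_z : ℝ → F, G be functions into normed spaces. Assume constants K_yz, K_yx, L_y, ε ≥ 0 and μ ∈ ℝ such that: (i) for all t ∈ [0,T], ‖e_y(t)‖ ≤ K_yz‖e_z(t)‖ + K_yx‖e_x(t)‖; (ii) for all t ∈ [0,T], ⟪(d/dt)e_x(t), e_x(t)⟫ ≤ μ‖e_x(t)‖² + L_y‖e_y(t)‖·‖e_x(t)‖; (iii) for all t ∈ [0,T], ‖e_z(t)‖ ≤ ε; and (iv) e_x(0) = 0. Then ‖e_x(T)‖ ≤ L_y·K_yz·Φ(T,α)·ε, where α = μ + L_y·K_yx. -/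
open RealInnerProductSpace

/-- Horizon-dependent amplification factor: `Φ(T,α) = (e^{αT} − 1)/α` for `α ≠ 0`,
and `Φ(T,0) = T`. -/
noncomputable def Phi (T α : ℝ) : ℝ :=
  if α = 0 then T else (Real.exp (α * T) - 1) / α

/-- Finite-horizon in-simulator acceptance bound: state-error part. -/
theorem finite_horizon_state_bound
    {E F G : Type*} [NormedAddCommGroup E] [InnerProductSpace ℝ E]
    [NormedAddCommGroup F] [NormedSpace ℝ F]
    [NormedAddCommGroup G] [NormedSpace ℝ G]
    (T : ℝ) (hT : 0 ≤ T)
    (e_x : ℝ → E) (e_y : ℝ → F) (e_z : ℝ → G)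
    (hdiff : ∀ t ∈ Set.Icc (0 : ℝ) T, DifferentiableAt ℝ e_x t)
    (K_yz K_yx L_y ε μ : ℝ)
    (hKyz : 0 ≤ K_yz) (hKyx : 0 ≤ K_yx) (hLy : 0 ≤ L_y) (hε : 0 ≤ ε)
    (h1 : ∀ t ∈ Set.Icc (0 : ℝ) T, ‖e_y t‖ ≤ K_yz * ‖e_z t‖ + K_yx * ‖e_x t‖)
    (h2 : ∀ t ∈ Set.Icc (0 : ℝ) T,
      ⟪deriv e_x t, e_x t⟫ ≤ μ * ‖e_x t‖ ^ 2 + L_y * ‖e_y t‖ * ‖e_x t‖)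
    (h3 : ∀ t ∈ Set.Icc (0 : ℝ) T, ‖e_z t‖ ≤ ε)
    (h4 : e_x 0 = 0) :
    ‖e_x T‖ ≤ L_y * K_yz * Phi T (μ + L_y * K_yx) * ε := by
  obtain ⟨α, hα⟩ : ∃ α, α = μ + L_y * K_yx := ⟨_, rfl⟩
  obtain ⟨c, hc⟩ : ∃ c, c = L_y * K_yz * ε := ⟨_, rfl⟩
  have hc0 : 0 ≤ c := by rw [hc]; positivity
  have key : ∀ t ∈ Set.Icc (0 : ℝ) T,
      ⟪deriv e_x t, e_x t⟫ ≤ α * ‖e_x t‖ ^ 2 + c * ‖e_x t‖ := by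
    intro t ht
    have hn : 0 ≤ ‖e_x t‖ := norm_nonneg _
    have hy : ‖e_y t‖ ≤ K_yz * ε + K_yx * ‖e_x t‖ :=
      (h1 t ht).trans (by have := mul_le_mul_of_nonneg_left (h3 t ht) hKyz; linarith)
    have h5 : L_y * ‖e_y t‖ * ‖e_x t‖ ≤ L_y * (K_yz * ε + K_yx * ‖e_x t‖) * ‖e_x t‖ := by
      gcongr
    have h6 := h2 t ht
    rw [hα, hc]
    linarith
  have main : ∀ η : ℝ, 0 < η → ‖e_x T‖ ≤ gronwallBound η α (c + |α| * η) T := by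
    intro η hη
    have hpos : ∀ t, 0 < ‖e_x t‖ ^ 2 + η ^ 2 := fun t => by positivity
    have hder : ∀ t ∈ Set.Icc (0 : ℝ) T,
        HasDerivAt (fun t => Real.sqrt (‖e_x t‖ ^ 2 + η ^ 2))
          (2 * ⟪e_x t, deriv e_x t⟫ / (2 * Real.sqrt (‖e_x t‖ ^ 2 + η ^ 2))) t := by
      intro t ht
      exact (((hdiff t ht).hasDerivAt.norm_sq).add_const (η ^ 2)).sqrt (hpos t).ne'
    have hg := le_gronwallBound_of_liminf_deriv_right_le
      (f := fun t => Real.sqrt (‖e_x t‖ ^ 2 + η ^ 2))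
      (f' := fun t => 2 * ⟪e_x t, deriv e_x t⟫ / (2 * Real.sqrt (‖e_x t‖ ^ 2 + η ^ 2)))
      (δ := η) (K := α) (ε := c + |α| * η) (a := 0) (b := T)
      (fun t ht => (hder t ht).continuousAt.continuousWithinAt)
      (fun t ht r hr =>
        (hder t (Set.Ico_subset_Icc_self ht)).hasDerivWithinAt.liminf_right_slope_le hr)
      (by simp [h4, Real.sqrt_sq hη.le])
      (by
        intro t ht
        have hk := key t (Set.Ico_subset_Icc_self ht)
        rw [real_inner_comm] at hk
        have hn : 0 ≤ ‖e_x t‖ := norm_nonneg _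
        have hs := Real.sq_sqrt (hpos t).le
        have hsp := Real.sqrt_pos.2 (hpos t)
        have hsη : η ≤ Real.sqrt (‖e_x t‖ ^ 2 + η ^ 2) := Real.le_sqrt_of_sq_le (by nlinarith)
        have hsn : ‖e_x t‖ ≤ Real.sqrt (‖e_x t‖ ^ 2 + η ^ 2) :=
          Real.le_sqrt_of_sq_le (by nlinarith)
        show 2 * ⟪e_x t, deriv e_x t⟫ / (2 * Real.sqrt (‖e_x t‖ ^ 2 + η ^ 2)) ≤
          α * Real.sqrt (‖e_x t‖ ^ 2 + η ^ 2) + (c + |α| * η)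
        rw [mul_div_mul_left _ _ two_ne_zero, div_le_iff₀ hsp]
        generalize Real.sqrt (‖e_x t‖ ^ 2 + η ^ 2) = s at *
        have a1 : c * ‖e_x t‖ ≤ c * s := mul_le_mul_of_nonneg_left hsn hc0
        have a2 : |α| * η * η ≤ |α| * η * s := mul_le_mul_of_nonneg_left hsη (by positivity)
        have a3 : -α * η ^ 2 ≤ |α| * η ^ 2 :=
          mul_le_mul_of_nonneg_right (neg_le_abs α) (sq_nonneg η)
        have a4 : α * s ^ 2 = α * ‖e_x t‖ ^ 2 + α * η ^ 2 := by rw [hs]; ring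
        linarith)
      T ⟨hT, le_rfl⟩
    rw [sub_zero] at hg
    exact (Real.le_sqrt_of_sq_le (by nlinarith)).trans hg
  have hcont : Continuous fun η : ℝ => gronwallBound η α (c + |α| * η) T := by
    unfold gronwallBound
    split_ifs <;> fun_prop
  have hlim : ‖e_x T‖ ≤ gronwallBound 0 α (c + |α| * 0) T := by
    refine ge_of_tendsto (x := nhdsWithin (0 : ℝ) (Set.Ioi 0))
      ((hcont.tendsto 0).mono_left nhdsWithin_le_nhds) ?_
    filter_upwards [self_mem_nhdsWithin] with η hη using main η hη
  refine hlim.trans (le_of_eq ?_)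
  rw [← hα, hc]
  unfold gronwallBound Phi
  split_ifs <;> ring
end

section
/- Let E be a real inner product space and let e_x : ℝ → E be differentiable on [0,T] with T ≥ 0, and let e_y, e_z : ℝ → F, G be functions into normed spaces. Assume constants K_yz, K_yx, L_y, ε ≥ 0 and μ ∈ ℝ satisfying: (i) for all t ∈ [0,T], ‖e_y(t)‖ ≤ K_yz‖e_z(t)‖ + K_yx‖e_x(t)‖; (ii) for all t ∈ [0,T], ⟪(d/dt)e_x(t), e_x(t)⟫ ≤ μ‖e_x(t)‖² + L_y‖e_y(t)‖·‖e_x(t)‖; (iii) for all t ∈ [0,T], ‖e_z(t)‖ ≤ ε; and (iv) e_x(0) = 0. Then ‖e_y(T)‖ ≤ K_yx·L_y·K_yz·Φ(T,α)·ε + K_yz·ε, where α = μ + L_y·K_yx. -/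
open RealInnerProductSpace

theorem gronwall_eq_Phi (δ K c x : ℝ) :
    gronwallBound δ K c x = δ * Real.exp (K * x) + c * Phi x K := by
  unfold gronwallBound Phi
  split_ifs with h
  · simp [h]
  · ring

theorem Phi_nonneg_of_nonneg {x : ℝ} (hx : 0 ≤ x) (K : ℝ) : 0 ≤ Phi x K := by
  unfold Phi
  split_ifs with h
  · exact hx
  · rcases lt_or_gt_of_ne h with h | h
    · apply div_nonneg_of_nonpos _ h.le
      have : Real.exp (K * x) ≤ 1 := Real.exp_le_one_iff.mpr (mul_nonpos_of_nonpos_of_nonneg h.le hx)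
      linarith
    · apply div_nonneg _ h.le
      have : 1 ≤ Real.exp (K * x) := Real.one_le_exp (mul_nonneg h.le hx)
      linarith

theorem norm_le_Phi_aux {E : Type*} [NormedAddCommGroup E] [InnerProductSpace ℝ E]
    (T : ℝ) (hT : 0 ≤ T) (e : ℝ → E)
    (hdiff : ∀ t ∈ Set.Icc (0 : ℝ) T, DifferentiableAt ℝ e t) (a c : ℝ) (hc : 0 ≤ c)
    (h : ∀ t ∈ Set.Icc (0 : ℝ) T, ⟪deriv e t, e t⟫ ≤ a * ‖e t‖ ^ 2 + c * ‖e t‖)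
    (h0 : e 0 = 0) : ‖e T‖ ≤ c * Phi T a := by
  have hP := Phi_nonneg_of_nonneg hT a
  have key : ∀ s : ℝ, 0 < s → ‖e T‖ ≤ s * Real.exp (a * T) + (c + s) * Phi T a := by
    intro s hs
    have gpos : ∀ t, 0 ≤ t → 0 < gronwallBound s a (c + s) t := by
      intro t ht
      rw [gronwall_eq_Phi]
      have := Phi_nonneg_of_nonneg ht a
      positivity
    have hf : ∀ t ∈ Set.Icc (0 : ℝ) T,
        HasDerivAt (fun t => ‖e t‖ ^ 2) (2 * ⟪e t, deriv e t⟫) t :=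
      fun t ht => (hdiff t ht).hasDerivAt.norm_sq
    have hB : ∀ t, HasDerivAt (fun t => gronwallBound s a (c + s) t ^ 2)
        (2 * gronwallBound s a (c + s) t * (a * gronwallBound s a (c + s) t + (c + s))) t := by
      intro t
      simpa using (hasDerivAt_gronwallBound s a (c + s) t).fun_pow 2
    have main := image_le_of_deriv_right_lt_deriv_boundary
      (f := fun t => ‖e t‖ ^ 2) (f' := fun t => 2 * ⟪e t, deriv e t⟫) (a := 0) (b := T)
      (fun t ht => (hf t ht).continuousAt.continuousWithinAt)
      (fun t ht => (hf t (Set.Ico_subset_Icc_self ht)).hasDerivWithinAt)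
      (by
        have := sq_nonneg (gronwallBound s a (c + s) 0)
        simpa [h0] using this) hB
      (by
        intro t ht hEq
        have gp := gpos t ht.1
        have hEq2 : ‖e t‖ = gronwallBound s a (c + s) t :=
          (pow_left_inj₀ (norm_nonneg _) gp.le two_ne_zero).mp hEq
        have := h t (Set.Ico_subset_Icc_self ht)
        rw [real_inner_comm, hEq2] at this
        nlinarith [mul_pos gp hs])
      (Set.right_mem_Icc.mpr hT)
    rw [← gronwall_eq_Phi]
    exact (pow_le_pow_iff_left₀ (norm_nonneg _) (gpos T hT).le two_ne_zero).mp main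
  apply le_of_forall_pos_le_add
  intro η hη
  have hM : 0 < Real.exp (a * T) + Phi T a := by positivity
  have := key (η / (Real.exp (a * T) + Phi T a)) (by positivity)
  have h5 : η / (Real.exp (a * T) + Phi T a) * (Real.exp (a * T) + Phi T a) = η :=
    div_mul_cancel₀ _ hM.ne'
  linarith

/-- Finite-horizon in-simulator acceptance bound: algebraic-error part. -/
theorem finite_horizon_algebraic_bound
    {E F G : Type*} [NormedAddCommGroup E] [InnerProductSpace ℝ E]
    [NormedAddCommGroup F] [NormedSpace ℝ F]
    [NormedAddCommGroup G] [NormedSpace ℝ G]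
    (T : ℝ) (hT : 0 ≤ T)
    (e_x : ℝ → E) (e_y : ℝ → F) (e_z : ℝ → G)
    (hdiff : ∀ t ∈ Set.Icc (0 : ℝ) T, DifferentiableAt ℝ e_x t)
    (K_yz K_yx L_y ε μ : ℝ)
    (hKyz : 0 ≤ K_yz) (hKyx : 0 ≤ K_yx) (hLy : 0 ≤ L_y) (hε : 0 ≤ ε)
    (h1 : ∀ t ∈ Set.Icc (0 : ℝ) T, ‖e_y t‖ ≤ K_yz * ‖e_z t‖ + K_yx * ‖e_x t‖)
    (h2 : ∀ t ∈ Set.Icc (0 : ℝ) T,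
      ⟪deriv e_x t, e_x t⟫ ≤ μ * ‖e_x t‖ ^ 2 + L_y * ‖e_y t‖ * ‖e_x t‖)
    (h3 : ∀ t ∈ Set.Icc (0 : ℝ) T, ‖e_z t‖ ≤ ε)
    (h4 : e_x 0 = 0) :
    ‖e_y T‖ ≤ K_yx * L_y * K_yz * Phi T (μ + L_y * K_yx) * ε + K_yz * ε := by
  have hx := norm_le_Phi_aux T hT e_x hdiff (μ + L_y * K_yx) (L_y * (K_yz * ε))
    (by positivity) (by
      intro t ht
      have hy : ‖e_y t‖ ≤ K_yz * ε + K_yx * ‖e_x t‖ :=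
        (h1 t ht).trans (by gcongr; exact h3 t ht)
      have : L_y * ‖e_y t‖ * ‖e_x t‖ ≤ L_y * (K_yz * ε + K_yx * ‖e_x t‖) * ‖e_x t‖ := by gcongr
      have := h2 t ht
      linarith) h4
  have hTm := Set.right_mem_Icc.mpr hT
  calc ‖e_y T‖ ≤ K_yz * ‖e_z T‖ + K_yx * ‖e_x T‖ := h1 T hTm
    _ ≤ K_yz * ε + K_yx * (L_y * (K_yz * ε) * Phi T (μ + L_y * K_yx)) := by
      gcongr
      exact h3 T hTm
    _ = _ := by ring
end

section
/- Let E be a real inner product space and let e_x : ℝ → E be differentiable on [0,T] with T ≥ 0, and let e_y, e_z : ℝ → F, G be functions into normed spaces. Assume constants K_yz, K_yx, L_y, ε ≥ 0 and μ ∈ ℝ satisfying: (i) for all t ∈ [0,T], ‖e_y(t)‖ ≤ K_yz‖e_z(t)‖ + K_yx‖e_x(t)‖; (ii) for all t ∈ [0,T], ⟪(d/dt)e_x(t), e_x(t)⟫ ≤ μ‖e_x(t)‖² + L_y‖e_y(t)‖·‖e_x(t)‖; (iii) for all t ∈ [0,T], ‖e_z(t)‖ ≤ ε; and (iv) e_x(0)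 = 0. Then ‖e_x(T)‖ + ‖e_y(T)‖ ≤ [(1 + K_yx)·L_y·K_yz·Φ(T,α) + K_yz]·ε, where α = μ + L_y·K_yx. -/
open RealInnerProductSpace

/-- Finite-horizon in-simulator acceptance bound: total simulator-level deviation. -/
theorem finite_horizon_total_bound
    {E F G : Type*} [NormedAddCommGroup E] [InnerProductSpace ℝ E]
    [NormedAddCommGroup F] [NormedSpace ℝ F]
    [NormedAddCommGroup G] [NormedSpace ℝ G]
    (T : ℝ) (hT : 0 ≤ T)
    (e_x : ℝ → E) (e_y : ℝ → F) (e_z : ℝ → G)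
    (hdiff : ∀ t ∈ Set.Icc (0 : ℝ) T, DifferentiableAt ℝ e_x t)
    (K_yz K_yx L_y ε μ : ℝ)
    (hKyz : 0 ≤ K_yz) (hKyx : 0 ≤ K_yx) (hLy : 0 ≤ L_y) (hε : 0 ≤ ε)
    (h1 : ∀ t ∈ Set.Icc (0 : ℝ) T, ‖e_y t‖ ≤ K_yz * ‖e_z t‖ + K_yx * ‖e_x t‖)
    (h2 : ∀ t ∈ Set.Icc (0 : ℝ) T,
      ⟪deriv e_x t, e_x t⟫ ≤ μ * ‖e_x t‖ ^ 2 + L_y * ‖e_y t‖ * ‖e_x t‖)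
    (h3 : ∀ t ∈ Set.Icc (0 : ℝ) T, ‖e_z t‖ ≤ ε)
    (h4 : e_x 0 = 0) :
    ‖e_x T‖ + ‖e_y T‖ ≤ ((1 + K_yx) * L_y * K_yz * Phi T (μ + L_y * K_yx) + K_yz) * ε := by
  set α := μ + L_y * K_yx with hα
  set c := L_y * K_yz * ε with hc
  have hc0 : 0 ≤ c := by positivity
  have hb : ∀ t ∈ Set.Icc (0 : ℝ) T, ⟪deriv e_x t, e_x t⟫ ≤ α * ‖e_x t‖ ^ 2 + c * ‖e_x t‖ := by
    intro t ht
    have hy : ‖e_y t‖ ≤ K_yz * ε + K_yx * ‖e_x t‖ :=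
      (h1 t ht).trans (by gcongr; exact h3 t ht)
    calc ⟪deriv e_x t, e_x t⟫ ≤ μ * ‖e_x t‖ ^ 2 + L_y * ‖e_y t‖ * ‖e_x t‖ := h2 t ht
      _ ≤ μ * ‖e_x t‖ ^ 2 + L_y * (K_yz * ε + K_yx * ‖e_x t‖) * ‖e_x t‖ := by gcongr
      _ = _ := by rw [hα, hc]; ring
  have key : ∀ d : ℝ, 0 < d → ‖e_x T‖ ≤ gronwallBound d α (c + |α| * d) T := by
    intro d hd
    have hpos : ∀ t, 0 < ‖e_x t‖ ^ 2 + d ^ 2 := fun t => by positivity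
    have hder : ∀ t ∈ Set.Icc (0 : ℝ) T,
        HasDerivAt (fun s => Real.sqrt (‖e_x s‖ ^ 2 + d ^ 2))
          ((2 * ⟪e_x t, deriv e_x t⟫) / (2 * Real.sqrt (‖e_x t‖ ^ 2 + d ^ 2))) t := by
      intro t ht
      exact (((hdiff t ht).hasDerivAt.norm_sq).add_const (d ^ 2)).sqrt (hpos t).ne'
    have h := le_gronwallBound_of_liminf_deriv_right_le
      (f := fun s => Real.sqrt (‖e_x s‖ ^ 2 + d ^ 2))
      (f' := fun t => (2 * ⟪e_x t, deriv e_x t⟫) / (2 * Real.sqrt (‖e_x t‖ ^ 2 + d ^ 2)))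
      (δ := d) (K := α) (ε := c + |α| * d) (a := 0) (b := T)
      (fun t ht => (hder t ht).continuousAt.continuousWithinAt)
      (fun t ht r hr => by
        have := (hder t (Set.Ico_subset_Icc_self ht)).hasDerivWithinAt (s := Set.Ici t)
        simpa only [smul_eq_mul] using! this.liminf_right_slope_le hr)
      (by simp [h4, Real.sqrt_sq hd.le])
      (fun t ht => by
        have hbt := hb t (Set.Ico_subset_Icc_self ht)
        rw [real_inner_comm] at hbt
        have hw := Real.sqrt_pos.2 (hpos t)
        have hw2 := Real.sq_sqrt (hpos t).le
        have hvw : ‖e_x t‖ ≤ Real.sqrt (‖e_x t‖ ^ 2 + d ^ 2) :=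
          Real.le_sqrt_of_sq_le (by nlinarith)
        have hdw : d ≤ Real.sqrt (‖e_x t‖ ^ 2 + d ^ 2) :=
          Real.le_sqrt_of_sq_le (by nlinarith [norm_nonneg (e_x t)])
        set w := Real.sqrt (‖e_x t‖ ^ 2 + d ^ 2)
        rw [div_le_iff₀ (by positivity)]
        have e1 : c * ‖e_x t‖ ≤ c * w := by gcongr
        have e2 : |α| * d * d ≤ |α| * d * w := by gcongr
        have e3 : -α * d ^ 2 ≤ |α| * d ^ 2 := by gcongr; exact neg_le_abs α
        have e4 : α * w ^ 2 = α * (‖e_x t‖ ^ 2 + d ^ 2) := by rw [hw2]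
        nlinarith)
      T ⟨hT, le_rfl⟩
    rw [sub_zero] at h
    exact (Real.le_sqrt_of_sq_le (by nlinarith)).trans h
  have hcont : Continuous fun d : ℝ => gronwallBound d α (c + |α| * d) T := by
    by_cases h0 : α = 0
    · simp only [h0, gronwallBound_K0]; fun_prop
    · simp only [gronwallBound_of_K_ne_0 h0]; fun_prop
  have hx : ‖e_x T‖ ≤ c * Phi T α := by
    have hlim : Filter.Tendsto (fun d : ℝ => gronwallBound d α (c + |α| * d) T)
        (nhdsWithin 0 (Set.Ioi 0)) (nhds (gronwallBound 0 α (c + |α| * 0) T)) :=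
      (hcont.tendsto 0).mono_left nhdsWithin_le_nhds
    have h := ge_of_tendsto hlim (Filter.eventually_of_mem self_mem_nhdsWithin key)
    refine h.trans (le_of_eq ?_)
    by_cases h0 : α = 0
    · simp [h0, gronwallBound_K0, Phi]
    · simp only [gronwallBound_of_K_ne_0 h0, Phi, if_neg h0]; ring
  have hTm : T ∈ Set.Icc (0 : ℝ) T := ⟨hT, le_rfl⟩
  have hy : ‖e_y T‖ ≤ K_yz * ε + K_yx * ‖e_x T‖ :=
    (h1 T hTm).trans (by gcongr; exact h3 T hTm)
  calc ‖e_x T‖ + ‖e_y T‖ ≤ (1 + K_yx) * ‖e_x T‖ + K_yz * ε := by linarith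
    _ ≤ (1 + K_yx) * (c * Phi T α) + K_yz * ε := by gcongr
    _ = _ := by rw [hc]; ring
end

section
/- Let E be a real inner product space and let e_x : ℝ → E be differentiable on [0,T] with T ≥ 0, and let e_y, e_z : ℝ → F, G be functions into normed spaces. Assume constants K_yx, L_y ≥ 0, K_yz > 0, μ ∈ ℝ, and Δ > 0 such that hypotheses (i)–(ii) of the finite-horizon bound hold (Lipschitz algebraic coupling and the one-sided differential inequality), e_x(0) = 0, and for all t ∈ [0,T], ‖e_z(t)‖ ≤ ε where 0 ≤ ε ≤ Δ / [(1 + K_yx)·L_y·K_yz·Φ(T,α) + K_yz] with α = μ + L_y·K_yx. Then ‖e_x(T)‖ + ‖e_y(T)‖ ≤ Δ. -/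
open RealInnerProductSpace

theorem Phi_nonneg_aux (T α : ℝ) (hT : 0 ≤ T) : 0 ≤ Phi T α := by
  unfold Phi
  split_ifs with h
  · exact hT
  · rcases lt_or_gt_of_ne h with h | h
    · apply div_nonneg_of_nonpos _ h.le
      have : Real.exp (α * T) ≤ 1 := Real.exp_le_one_iff.mpr (by nlinarith)
      linarith
    · apply div_nonneg _ h.le
      have : 1 ≤ Real.exp (α * T) := Real.one_le_exp (by positivity)
      linarith

theorem gronwall_eq_aux (δ α c t : ℝ) :
    gronwallBound δ α c t = δ * Real.exp (α * t) + c * Phi t α := by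
  unfold gronwallBound Phi
  split_ifs with h
  · simp [h]
  · ring

/-- Sufficiency of the interface requirement `ε ≤ ε_max` for an admissible
simulator-level deviation `Δ`. -/
theorem interface_requirement_sufficient
    {E F G : Type*} [NormedAddCommGroup E] [InnerProductSpace ℝ E]
    [NormedAddCommGroup F] [NormedSpace ℝ F]
    [NormedAddCommGroup G] [NormedSpace ℝ G]
    (T : ℝ) (hT : 0 ≤ T)
    (e_x : ℝ → E) (e_y : ℝ → F) (e_z : ℝ → G)
    (hdiff : ∀ t ∈ Set.Icc (0 : ℝ) T, DifferentiableAt ℝ e_x t)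
    (K_yz K_yx L_y ε μ Δ : ℝ)
    (hKyz : 0 < K_yz) (hKyx : 0 ≤ K_yx) (hLy : 0 ≤ L_y) (hΔ : 0 < Δ)
    (h1 : ∀ t ∈ Set.Icc (0 : ℝ) T, ‖e_y t‖ ≤ K_yz * ‖e_z t‖ + K_yx * ‖e_x t‖)
    (h2 : ∀ t ∈ Set.Icc (0 : ℝ) T,
      ⟪deriv e_x t, e_x t⟫ ≤ μ * ‖e_x t‖ ^ 2 + L_y * ‖e_y t‖ * ‖e_x t‖)
    (h4 : e_x 0 = 0)
    (hε0 : 0 ≤ ε)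
    (hεmax : ε ≤ Δ / ((1 + K_yx) * L_y * K_yz * Phi T (μ + L_y * K_yx) + K_yz))
    (h3 : ∀ t ∈ Set.Icc (0 : ℝ) T, ‖e_z t‖ ≤ ε) :
    ‖e_x T‖ + ‖e_y T‖ ≤ Δ := by
  have key : ∀ η : ℝ, 0 < η →
      ‖e_x T‖ ≤ gronwallBound η (μ + L_y * K_yx) (L_y * K_yz * ε + η) T := by
    intro η hη
    have hc : 0 ≤ L_y * K_yz * ε := by positivity
    have hpos : ∀ t, 0 ≤ t →
        0 < gronwallBound η (μ + L_y * K_yx) (L_y * K_yz * ε + η) t := by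
      intro t ht
      rw [gronwall_eq_aux]
      have := Phi_nonneg_aux t (μ + L_y * K_yx) ht
      positivity
    have hd : ∀ t ∈ Set.Icc (0 : ℝ) T,
        HasDerivAt (fun t => ‖e_x t‖ ^ 2) (2 * ⟪e_x t, deriv e_x t⟫) t :=
      fun t ht => (hdiff t ht).hasDerivAt.norm_sq
    have main := image_le_of_deriv_right_lt_deriv_boundary
      (f := fun t => ‖e_x t‖ ^ 2) (f' := fun t => 2 * ⟪e_x t, deriv e_x t⟫)
      (a := 0) (b := T)
      (B := fun t => gronwallBound η (μ + L_y * K_yx) (L_y * K_yz * ε + η) t ^ 2)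
      (fun t ht => (hd t ht).continuousAt.continuousWithinAt)
      (fun t ht => (hd t ⟨ht.1, ht.2.le⟩).hasDerivWithinAt)
      (by simp only [h4, norm_zero]; nlinarith [hpos 0 le_rfl])
      (fun t => (hasDerivAt_gronwallBound η (μ + L_y * K_yx) (L_y * K_yz * ε + η) t).pow 2)
      (by
        intro t ht heq
        have hp := hpos t ht.1
        have htT : t ∈ Set.Icc (0 : ℝ) T := ⟨ht.1, ht.2.le⟩
        have hn : ‖e_x t‖ = gronwallBound η (μ + L_y * K_yx) (L_y * K_yz * ε + η) t :=
          (pow_left_inj₀ (norm_nonneg _) hp.le two_ne_zero).mp heq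
        have a1 := h1 t htT
        have a2 := h2 t htT
        have a3 := h3 t htT
        rw [real_inner_comm] at a2
        rw [← hn] at hp ⊢
        have a4 : ‖e_y t‖ ≤ K_yz * ε + K_yx * ‖e_x t‖ :=
          a1.trans (by gcongr)
        have a5 : L_y * ‖e_y t‖ * ‖e_x t‖ ≤ L_y * (K_yz * ε + K_yx * ‖e_x t‖) * ‖e_x t‖ := by
          gcongr
        have a6 : 0 < η * ‖e_x t‖ := by positivity
        norm_num
        nlinarith)
    have := main (x := T) ⟨hT, le_rfl⟩
    exact (pow_le_pow_iff_left₀ (norm_nonneg _) (hpos T hT).le two_ne_zero).mp this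
  have hΦ := Phi_nonneg_aux T (μ + L_y * K_yx) hT
  have hx : ‖e_x T‖ ≤ L_y * K_yz * ε * Phi T (μ + L_y * K_yx) := by
    apply le_of_forall_pos_le_add
    intro r hr
    have hM : 0 < Real.exp ((μ + L_y * K_yx) * T) + Phi T (μ + L_y * K_yx) := by positivity
    have := key _ (div_pos hr hM)
    rw [gronwall_eq_aux] at this
    have e := div_mul_cancel₀ r hM.ne'
    linarith
  have hT' : T ∈ Set.Icc (0 : ℝ) T := ⟨hT, le_rfl⟩
  have hy : ‖e_y T‖ ≤ K_yz * ε + K_yx * ‖e_x T‖ :=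
    (h1 T hT').trans (by gcongr; exact h3 T hT')
  rw [le_div_iff₀ (by positivity)] at hεmax
  have := mul_le_mul_of_nonneg_left hx hKyx
  linarith
end

section
/- Let E be a real inner product space, F a normed space, and f : E × F → E such that: (a) for all x₁, x₂ ∈ E and y ∈ F, ⟪f(x₁,y) − f(x₂,y), x₁ − x₂⟫ ≤ μ‖x₁ − x₂‖² (one-sided Lipschitz in x with constant μ ∈ ℝ), and (b) for all x ∈ E and y₁, y₂ ∈ F, ‖f(x,y₁) − f(x,y₂)‖ ≤ L_y‖y₁ − y₂‖ with L_y ≥ 0. Let x, x̂ : ℝ → E be differentiable with x'(t) = f(x(t), y(t)) and x̂'(t) = f(x̂(t), ŷ(t)) for functions y, ŷ : ℝ → F. Then for all t, setting e_x(t) = x̂(t) − x(t) and e_y(t) = ŷ(t) − y(t): ⟪e_x'(t), e_x(t)⟫ ≤ μ‖e_x(t)‖² + L_y‖e_y(t)‖·‖e_x(t)‖. -/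
open RealInnerProductSpace

/-- Derivation of the one-sided differential inequality on the state error from
one-sided Lipschitz continuity of the dynamics in the state and Lipschitz
continuity in the algebraic variables. -/
theorem state_error_one_sided_inequality
    {E F : Type*} [NormedAddCommGroup E] [InnerProductSpace ℝ E]
    [NormedAddCommGroup F] [NormedSpace ℝ F]
    (f : E → F → E) (μ L_y : ℝ) (hLy : 0 ≤ L_y)
    (ha : ∀ (x₁ x₂ : E) (y : F), ⟪f x₁ y - f x₂ y, x₁ - x₂⟫ ≤ μ * ‖x₁ - x₂‖ ^ 2)
    (hb : ∀ (x : E) (y₁ y₂ : F), ‖f x y₁ - f x y₂‖ ≤ L_y * ‖y₁ - y₂‖)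
    (x xh : ℝ → E) (y yh : ℝ → F)
    (hx : ∀ t, HasDerivAt x (f (x t) (y t)) t)
    (hxh : ∀ t, HasDerivAt xh (f (xh t) (yh t)) t) :
    ∀ t, ⟪deriv (fun s => xh s - x s) t, xh t - x t⟫ ≤
      μ * ‖xh t - x t‖ ^ 2 + L_y * ‖yh t - y t‖ * ‖xh t - x t‖ := by
  intro t
  have hd : deriv (fun s => xh s - x s) t = f (xh t) (yh t) - f (x t) (y t) :=
    ((hxh t).sub (hx t)).deriv
  have hsplit : f (xh t) (yh t) - f (x t) (y t) =
      (f (xh t) (yh t) - f (x t) (yh t)) + (f (x t) (yh t) - f (x t) (y t)) := by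
    abel
  rw [hd, hsplit, inner_add_left]
  exact add_le_add (ha _ _ _) ((real_inner_le_norm _ _).trans
    (mul_le_mul_of_nonneg_right (hb _ _ _) (norm_nonneg _)))
end

section
/- Let E be a real inner product space, c ≥ 0, T ≥ 0, and let e : ℝ → E be differentiable on [0,T] with e(0) = 0 and ⟪e'(t), e(t)⟫ ≤ c‖e(t)‖ for all t ∈ [0,T]. Then ‖e(T)‖ ≤ c·T. -/
open RealInnerProductSpace

/-- Grönwall-type kernel of the finite-horizon in-simulator bound, case `α = 0`. -/
theorem gronwall_kernel_zero
    {E : Type*} [NormedAddCommGroup E] [InnerProductSpace ℝ E]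
    (c T : ℝ) (hc : 0 ≤ c) (hT : 0 ≤ T)
    (e : ℝ → E)
    (hdiff : ∀ t ∈ Set.Icc (0 : ℝ) T, DifferentiableAt ℝ e t)
    (h0 : e 0 = 0)
    (hineq : ∀ t ∈ Set.Icc (0 : ℝ) T, ⟪deriv e t, e t⟫ ≤ c * ‖e t‖) :
    ‖e T‖ ≤ c * T := by
  have key : ∀ ε : ℝ, 0 < ε → ‖e T‖ ≤ ε + (c + ε) * T := by
    intro ε hε
    have hd : ∀ t ∈ Set.Icc (0 : ℝ) T,
        HasDerivAt (fun t => ‖e t‖ ^ 2) (2 * ⟪e t, deriv e t⟫) t :=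
      fun t ht => (hdiff t ht).hasDerivAt.norm_sq
    have hB : ∀ t : ℝ, HasDerivAt (fun t : ℝ => (ε + (c + ε) * t) ^ 2)
        (2 * (ε + (c + ε) * t) * (c + ε)) t := by
      intro t
      have h := ((((hasDerivAt_id t).const_mul (c + ε)).const_add ε).pow 2)
      exact h.congr_deriv (by simp)
    have ha : ‖e 0‖ ^ 2 ≤ (ε + (c + ε) * 0) ^ 2 := by
      rw [h0, norm_zero]
      nlinarith [sq_nonneg ε]
    have hle := image_le_of_deriv_right_lt_deriv_boundary
      (fun t ht => (hd t ht).continuousAt.continuousWithinAt)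
      (fun t ht => (hd t (Set.Ico_subset_Icc_self ht)).hasDerivWithinAt)
      ha hB
      (by
        intro t ht heq
        have ht0 : 0 ≤ t := ht.1
        have hb : 0 < ε + (c + ε) * t := by positivity
        have hn : ‖e t‖ = ε + (c + ε) * t :=
          (sq_eq_sq₀ (norm_nonneg _) hb.le).1 heq
        have hi := hineq t (Set.Ico_subset_Icc_self ht)
        rw [real_inner_comm, hn] at hi
        nlinarith [mul_pos hb hε])
      (Set.right_mem_Icc.2 hT)
    have hb : 0 ≤ ε + (c + ε) * T := by positivity
    exact (sq_le_sq₀ (norm_nonneg _) hb).1 hle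
  refine le_of_forall_pos_le_add fun δ hδ => ?_
  have h := key (δ / (1 + T)) (by positivity)
  have h2 : δ / (1 + T) * (1 + T) = δ := div_mul_cancel₀ _ (by positivity)
  linarith
end
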